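/- arXiv:math/9802067 — 3 statements merged into one kernel-verified Lean document; each statement's English description precedes it below -/
import Mathlib

section
/- Let X be a full Hilbert bimodule over a unital C*-algebra A. Then: (1) there exist y_1,…,y_n ∈ X with Σ_{i=1}^n (y_i|y_i)_A = 1; (2) for such a multiplet, the completely positive map Φ(T) = Σ_i S_{y_i}* T S_{y_i} on O_X satisfies Φ(T σ(B)) = Φ(T) B for all T ∈ O_X and all B ∈ A' ∩ O_X; in particular Φ is a left inverse of σ on A' ∩ O_X. -/
/-!
For the existence of the multiplet, polarisation gives `a + a* ≤ Σ (zⱼ|zⱼ)` for every `a` in the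
span of the inner products, where `z` runs through finitely many vectors
(`exists_sum_inner_self_ge`): for a generator this is `(x - y|x - y) ≥ 0`. By fullness some such
`a` lies within `1/4` of `1`, so that `c = Σ (zⱼ|zⱼ) ≥ 1` is strictly positive, and the vectors
`yⱼ = zⱼ c^{-1/2}` satisfy `Σ (yⱼ|yⱼ) = c^{-1/2} c c^{-1/2} = 1`.

For the left inverse, an element `B` of the relative commutant satisfies `σ(B) S_y = S_y B`
(`gsh_mul_S`): move `B` past `(uᵢ|y) ∈ A` and apply the basis expansion `Σ uᵢ (uᵢ|y) = y`. Hence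
`Φ(T σ(B)) = Σ S_{yᵢ}* T S_{yᵢ} B = Φ(T) B`, and `Φ(1) = Σ (yᵢ|yᵢ) = 1`.
-/

noncomputable section

universe uO

open scoped BigOperators

/-- A right (pre-)Hilbert C*-module structure on `X` over the unital C*-algebra `A`:
a right `A`-action together with an `A`-valued inner product, whose induced norm is
the given norm on `X`. -/
structure RightHilbertModule (A : Type*) [CStarAlgebra A] (X : Type*)
    [NormedAddCommGroup X] [NormedSpace ℂ X] where
  rsmul : X → A → X
  inner : X → X → A
  rsmul_add : ∀ (x y : X) (a : A), rsmul (x + y) a = rsmul x a + rsmul y a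
  rsmul_addA : ∀ (x : X) (a b : A), rsmul x (a + b) = rsmul x a + rsmul x b
  rsmul_mul : ∀ (x : X) (a b : A), rsmul (rsmul x a) b = rsmul x (a * b)
  rsmul_one : ∀ x : X, rsmul x 1 = x
  rsmul_smulC : ∀ (c : ℂ) (x : X) (a : A), rsmul (c • x) a = c • rsmul x a
  rsmul_smulC' : ∀ (c : ℂ) (x : X) (a : A), rsmul x (c • a) = c • rsmul x a
  inner_add_right : ∀ x y z : X, inner x (y + z) = inner x y + inner x z
  inner_smulC_right : ∀ (c : ℂ) (x y : X), inner x (c • y) = c • inner x y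
  inner_rsmul_right : ∀ (x y : X) (a : A), inner x (rsmul y a) = inner x y * a
  star_inner : ∀ x y : X, star (inner x y) = inner y x
  inner_self_pos : ∀ x : X, ∃ a : A, inner x x = star a * a
  inner_self_eq_zero : ∀ {x : X}, inner x x = 0 → x = 0
  norm_sq_eq : ∀ x : X, ‖x‖ ^ 2 = ‖inner x x‖
  norm_inner_le : ∀ x y : X, ‖inner x y‖ ≤ ‖x‖ * ‖y‖
  norm_rsmul_le : ∀ (x : X) (a : A), ‖rsmul x a‖ ≤ ‖x‖ * ‖a‖

/-- A Hilbert C*-bimodule over `A`: a right Hilbert `A`-module together with a left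
action of `A` by adjointable operators. -/
structure HilbertBimodule (A : Type*) [CStarAlgebra A] (X : Type*)
    [NormedAddCommGroup X] [NormedSpace ℂ X] extends RightHilbertModule A X where
  lsmul : A → X → X
  lsmul_add : ∀ (a : A) (x y : X), lsmul a (x + y) = lsmul a x + lsmul a y
  lsmul_addA : ∀ (a b : A) (x : X), lsmul (a + b) x = lsmul a x + lsmul b x
  lsmul_mul : ∀ (a b : A) (x : X), lsmul (a * b) x = lsmul a (lsmul b x)
  lsmul_one : ∀ x : X, lsmul 1 x = x
  lsmul_smulC : ∀ (c : ℂ) (a : A) (x : X), lsmul a (c • x) = c • lsmul a x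
  lsmul_rsmul : ∀ (a : A) (x : X) (b : A), rsmul (lsmul a x) b = lsmul a (rsmul x b)
  inner_lsmul : ∀ (a : A) (x y : X), inner (lsmul a x) y = inner x (lsmul (star a) y)

namespace HilbertBimodule

variable {A : Type*} [CStarAlgebra A] {X : Type*}
  [NormedAddCommGroup X] [NormedSpace ℂ X]

/-- The left action of `A` is faithful (equivalently, isometric). -/
def LeftFaithful (M : HilbertBimodule A X) : Prop :=
  ∀ a : A, (∀ x : X, M.lsmul a x = 0) → a = 0

/-- The module is full: the closed linear span of inner products is all of `A`. -/
def IsFull (M : HilbertBimodule A X) : Prop :=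
  (Submodule.span ℂ {a : A | ∃ x y : X, a = M.inner x y}).topologicalClosure = ⊤

/-- `u` is a finite (right) basis of `X`. -/
def IsBasis {n : ℕ} (M : HilbertBimodule A X) (u : Fin n → X) : Prop :=
  ∀ x : X, (∑ i, M.rsmul (u i) (M.inner (u i) x)) = x

/-- The inner product of `X^{⊗ r}`, expressed on words:
`⟨x₁⊗…⊗x_r, y₁⊗…⊗y_r⟩ = ⟨x_r, φ(⟨x_{r-1}, φ(…⟨x₁,y₁⟩…) y_{r-1}⟩) y_r⟩`. -/
def innerWord (M : HilbertBimodule A X) : List X → List X → A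
  | [], [] => 1
  | [x], [y] => M.inner x y
  | x :: x' :: xs, y :: y' :: ys =>
      M.innerWord (x' :: xs) (M.lsmul (M.inner x y) y' :: ys)
  | _, _ => 0

/-- `J` is an `X`-invariant ideal. -/
def XInvariant (M : HilbertBimodule A X) (J : Submodule ℂ A) : Prop :=
  ∀ x y : X, ∀ a ∈ J, M.inner x (M.lsmul a y) ∈ J

/-- The ideal `J_X = {a : (x|φ(a)y) ∈ J for all x y}` associated with `J`. -/
def JX (M : HilbertBimodule A X) (J : Submodule ℂ A) : Set A :=
  {a : A | ∀ x y : X, M.inner x (M.lsmul a y) ∈ J}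

end HilbertBimodule

/-- A closed two-sided ideal of a normed algebra, given as a closed subspace which
absorbs multiplication. -/
def IsClosedIdeal {B : Type*} [NormedRing B] [NormedAlgebra ℂ B] (J : Submodule ℂ B) : Prop :=
  IsClosed (J : Set B) ∧ ∀ b : B, ∀ j ∈ J, b * j ∈ J ∧ j * b ∈ J

/-- `A` is `X`-simple: it has no proper nonzero closed `X`-invariant ideal. -/
def HilbertBimodule.XSimple {A : Type*} [CStarAlgebra A] {X : Type*}
    [NormedAddCommGroup X] [NormedSpace ℂ X] (M : HilbertBimodule A X) : Prop :=
  ∀ J : Submodule ℂ A, IsClosedIdeal J → M.XInvariant J → J = ⊥ ∨ J = ⊤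

/-- A representation of the Hilbert bimodule `X` in a C*-algebra `D`: a linear map
`V : X → D` and a unital *-homomorphism `ρ : A → D` satisfying the bimodule relations. -/
structure HilbertBimodule.Represents {A : Type*} [CStarAlgebra A] {X : Type*}
    [NormedAddCommGroup X] [NormedSpace ℂ X] (M : HilbertBimodule A X)
    {D : Type*} [CStarAlgebra D] (V : X → D) (ρ : A →⋆ₐ[ℂ] D) : Prop where
  map_add : ∀ x y : X, V (x + y) = V x + V y
  map_smul : ∀ (c : ℂ) (x : X), V (c • x) = c • V x
  map_rsmul : ∀ (x : X) (a : A), V (M.rsmul x a) = V x * ρ a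
  map_lsmul : ∀ (a : A) (x : X), V (M.lsmul a x) = ρ a * V x
  map_inner : ∀ x y : X, star (V x) * V y = ρ (M.inner x y)

/-- The product `S_{x₁} ⋯ S_{x_r}` associated with a word `x₁ … x_r`. -/
def wordOf {X O : Type*} [Monoid O] (S : X → O) : List X → O
  | [] => 1
  | x :: xs => S x * wordOf S xs

/-- The Pimsner C*-algebra of a (full, finite projective) Hilbert bimodule `X` with
finite basis `u`: a C*-algebra `O` generated by a universal representation of `X`
with support `1`. -/
structure PimsnerAlgebra {A : Type*} [CStarAlgebra A] {X : Type*}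
    [NormedAddCommGroup X] [NormedSpace ℂ X] (M : HilbertBimodule A X)
    {n : ℕ} (u : Fin n → X) (O : Type uO) [CStarAlgebra O] where
  ja : A →⋆ₐ[ℂ] O
  S : X → O
  rep : M.Represents S ja
  supp : (∑ i, S (u i) * star (S (u i))) = 1
  generates :
    (StarAlgebra.adjoin ℂ (Set.range S ∪ Set.range ja)).topologicalClosure = ⊤
  universal : ∀ {D : Type uO} [CStarAlgebra D] (V : X → D) (ρ : A →⋆ₐ[ℂ] D),
    M.Represents V ρ → (∑ i, V (u i) * star (V (u i))) = 1 →
    ∃ Φ : O →⋆ₐ[ℂ] D, (∀ x : X, Φ (S x) = V x) ∧ ∀ a : A, Φ (ja a) = ρ a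

namespace PimsnerAlgebra

variable {A : Type*} [CStarAlgebra A] {X : Type*}
  [NormedAddCommGroup X] [NormedSpace ℂ X] {M : HilbertBimodule A X}
  {n : ℕ} {u : Fin n → X} {O : Type*} [CStarAlgebra O]

/-- The space `F_{r,s}`, the image of `K_A(X^{⊗r}, X^{⊗s})` in `O_X`: the linear span of
the products `S_{x₁}⋯S_{x_s} S_{y_r}*⋯S_{y_1}*`. -/
def Fspace (P : PimsnerAlgebra M u O) (r s : ℕ) : Submodule ℂ O :=
  Submodule.span ℂ
    {d : O | ∃ xs ys : List X, xs.length = s ∧ ys.length = r ∧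
      d = wordOf P.S xs * star (wordOf P.S ys)}

/-- The homogeneous subspace of degree `k` of the dense graded subalgebra of `O_X`. -/
def homog (P : PimsnerAlgebra M u O) (k : ℤ) : Submodule ℂ O :=
  Submodule.span ℂ
    {d : O | ∃ xs ys : List X, (xs.length : ℤ) - (ys.length : ℤ) = k ∧
      d = wordOf P.S xs * star (wordOf P.S ys)}

/-- The fixed point algebra `O_X^{(0)}` of the gauge action. -/
def Ozero (P : PimsnerAlgebra M u O) : Submodule ℂ O :=
  (P.homog 0).topologicalClosure

/-- The copy of `K_A(X^{⊗r})` inside `O_X`. -/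
def Kspace (P : PimsnerAlgebra M u O) (r : ℕ) : Submodule ℂ O :=
  (P.Fspace r r).topologicalClosure

/-- The relative commutant `A' ∩ O_X`. -/
def commA (P : PimsnerAlgebra M u O) : Set O :=
  {T : O | ∀ a : A, P.ja a * T = T * P.ja a}

/-- The canonical completely positive map `σ(T) = Σ_i S_{u_i} T S_{u_i}*`. -/
def gsh (P : PimsnerAlgebra M u O) (T : O) : O :=
  ∑ i, P.S (u i) * T * star (P.S (u i))

/-- The closed ideal of `O_X` generated by an ideal `J` of `A`:
the closed linear span of `X^r J (X^s)*`. -/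
def idealTo (P : PimsnerAlgebra M u O) (J : Submodule ℂ A) : Submodule ℂ O :=
  (Submodule.span ℂ
    {d : O | ∃ (xs ys : List X) (a : A), a ∈ J ∧
      d = wordOf P.S xs * P.ja a * star (wordOf P.S ys)}).topologicalClosure

/-- The restriction `𝒥 ∩ A` of an ideal `𝒥` of `O_X` to `A`. -/
def idealRes (P : PimsnerAlgebra M u O) (𝒥 : Submodule ℂ O) : Submodule ℂ A :=
  𝒥.comap P.ja.toAlgHom.toLinearMap

end PimsnerAlgebra

/-- A C*-norm on a complex *-algebra. -/
structure IsCStarNorm {B : Type*} [Ring B] [StarRing B] [Algebra ℂ B] (N : B → ℝ) : Prop where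
  nonneg : ∀ b, 0 ≤ N b
  eq_zero : ∀ b, N b = 0 ↔ b = 0
  add_le : ∀ b c, N (b + c) ≤ N b + N c
  smul_eq : ∀ (z : ℂ) (b), N (z • b) = ‖z‖ * N b
  mul_le : ∀ b c, N (b * c) ≤ N b * N c
  cstar : ∀ b, N (star b * b) = N b ^ 2

/-- A map between C*-algebras is completely isometric if all its matrix amplifications
are isometric (with respect to the unique C*-norms on the matrix algebras). -/
def CompletelyIsometric {A O : Type*} [CStarAlgebra A] [CStarAlgebra O] (f : A → O) : Prop :=
  ∀ (m : ℕ) (NA : Matrix (Fin m) (Fin m) A → ℝ) (NO : Matrix (Fin m) (Fin m) O → ℝ),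
    IsCStarNorm NA → IsCStarNorm NO →
    ∀ aM : Matrix (Fin m) (Fin m) A, NO (aM.map f) = NA aM

/-- Condition (I)-freeness for the bimodule `X` (realized inside a Pimsner algebra). -/
def PimsnerAlgebra.IFree {A : Type*} [CStarAlgebra A] {X : Type*}
    [NormedAddCommGroup X] [NormedSpace ℂ X] {M : HilbertBimodule A X}
    {n : ℕ} {u : Fin n → X} {O : Type*} [CStarAlgebra O]
    (P : PimsnerAlgebra M u O) : Prop :=
  ∀ k : ℕ, ∃ (p q r : ℕ) (T : O),
    T ∈ (P.Fspace p q).topologicalClosure ∧ T ∈ P.commA ∧ ‖T‖ = 1 ∧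
    (∀ a : A, P.ja a * (star T * T) ∈ P.Kspace r) ∧
    CompletelyIsometric (fun a : A => P.ja a * (star T * T)) ∧
    ‖star T * (P.gsh)^[k] T‖ < 1

/-- Data exhibiting `(A', X')` as the quotient of the Hilbert bimodule `X` over `A`
by a closed `X`-invariant ideal `J` (so `A' = A/J` and `X' = X/X_J`). -/
structure QuotientBimodule {A : Type*} [CStarAlgebra A] {X : Type*}
    [NormedAddCommGroup X] [NormedSpace ℂ X] (M : HilbertBimodule A X)
    (J : Submodule ℂ A) {A' : Type*} [CStarAlgebra A'] (q : A →⋆ₐ[ℂ] A')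
    {X' : Type*} [NormedAddCommGroup X'] [NormedSpace ℂ X']
    (M' : HilbertBimodule A' X') (qX : X → X') : Prop where
  q_surj : Function.Surjective q
  q_ker : ∀ a : A, q a = 0 ↔ a ∈ J
  qX_add : ∀ x y : X, qX (x + y) = qX x + qX y
  qX_smul : ∀ (c : ℂ) (x : X), qX (c • x) = c • qX x
  qX_surj : Function.Surjective qX
  qX_ker : ∀ x : X, qX x = 0 ↔ M.inner x x ∈ J
  inner_compat : ∀ x y : X, M'.inner (qX x) (qX y) = q (M.inner x y)
  rsmul_compat : ∀ (x : X) (a : A), qX (M.rsmul x a) = M'.rsmul (qX x) (q a)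
  lsmul_compat : ∀ (a : A) (x : X), qX (M.lsmul a x) = M'.lsmul (q a) (qX x)

/-- Condition (II)-freeness: every quotient of `X` by a closed `X`-invariant ideal `J`
with `J_X = J` is (I)-free. -/
def HilbertBimodule.IIFree {A : Type*} [CStarAlgebra A] {X : Type*}
    [NormedAddCommGroup X] [NormedSpace ℂ X] (M : HilbertBimodule A X) : Prop :=
  ∀ J : Submodule ℂ A, IsClosedIdeal J → M.XInvariant J → (∀ a ∈ M.JX J, a ∈ J) →
    ∀ (A' : Type*) [CStarAlgebra A'] (q : A →⋆ₐ[ℂ] A')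
      (X' : Type*) [NormedAddCommGroup X'] [NormedSpace ℂ X']
      (M' : HilbertBimodule A' X') (qX : X → X'),
      QuotientBimodule M J q M' qX →
      ∀ (m : ℕ) (v : Fin m → X'), M'.IsBasis v →
      ∀ (O' : Type*) [CStarAlgebra O'] (P' : PimsnerAlgebra M' v O'), P'.IFree


namespace RightHilbertModule

variable {A : Type*} [CStarAlgebra A] {X : Type*}
  [NormedAddCommGroup X] [NormedSpace ℂ X]

/-- `u` is a finite basis of the right Hilbert module `X`. -/
def IsBasis {n : ℕ} (M : RightHilbertModule A X) (u : Fin n → X) : Prop :=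
  ∀ x : X, (∑ i, M.rsmul (u i) (M.inner (u i) x)) = x

/-- The module is full: the closed linear span of inner products is all of `A`. -/
def IsFull (M : RightHilbertModule A X) : Prop :=
  (Submodule.span ℂ {a : A | ∃ x y : X, a = M.inner x y}).topologicalClosure = ⊤

end RightHilbertModule

/-- An adjointable operator between right Hilbert C*-modules. -/
structure Adjointable {A : Type*} [CStarAlgebra A] {X Y : Type*}
    [NormedAddCommGroup X] [NormedSpace ℂ X] [NormedAddCommGroup Y] [NormedSpace ℂ Y]
    (M : RightHilbertModule A X) (N : RightHilbertModule A Y) where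
  toFun : X →L[ℂ] Y
  adjFun : Y →L[ℂ] X
  inner_adj : ∀ (x : X) (y : Y), N.inner (toFun x) y = M.inner x (adjFun y)

namespace Adjointable

variable {A : Type*} [CStarAlgebra A] {X Y Z : Type*}
  [NormedAddCommGroup X] [NormedSpace ℂ X] [NormedAddCommGroup Y] [NormedSpace ℂ Y]
  [NormedAddCommGroup Z] [NormedSpace ℂ Z]
  {M : RightHilbertModule A X} {N : RightHilbertModule A Y} {L : RightHilbertModule A Z}

/-- The adjoint of an adjointable operator. -/
def flip (k : Adjointable M N) : Adjointable N M where
  toFun := k.adjFun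
  adjFun := k.toFun
  inner_adj := fun y x => by
    have h := congrArg star (k.inner_adj x y)
    rw [N.star_inner, M.star_inner] at h
    exact h.symm

/-- Composition of adjointable operators. -/
def comp (k : Adjointable M N) (k' : Adjointable L M) : Adjointable L N where
  toFun := k.toFun.comp k'.toFun
  adjFun := k'.adjFun.comp k.adjFun
  inner_adj := fun z y => by
    simp only [ContinuousLinearMap.comp_apply]
    rw [k.inner_adj, k'.inner_adj]

end Adjointable

/-- An abstract presentation of the `r`-fold internal tensor power `X^{⊗ r}`:
a Hilbert bimodule `T` together with a map `ι` (for `x₁ ⊗ … ⊗ x_r`) which is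
`A`-balanced, compatible with the module actions, total, and induces the canonical
inner product of the tensor power. -/
structure TensorPowerPresentation {A : Type*} [CStarAlgebra A] {X : Type*}
    [NormedAddCommGroup X] [NormedSpace ℂ X] (M : HilbertBimodule A X) (r : ℕ)
    {T : Type*} [NormedAddCommGroup T] [NormedSpace ℂ T] (Mr : HilbertBimodule A T)
    (ι : (Fin r → X) → T) : Prop where
  inner_eq : ∀ x y : Fin r → X,
    Mr.inner (ι x) (ι y) = M.innerWord (List.ofFn x) (List.ofFn y)
  total : (Submodule.span ℂ (Set.range ι)).topologicalClosure = ⊤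
  add_slot : ∀ (x : Fin r → X) (i : Fin r) (z z' : X),
    ι (Function.update x i (z + z')) = ι (Function.update x i z) + ι (Function.update x i z')
  smul_slot : ∀ (x : Fin r → X) (i : Fin r) (c : ℂ) (z : X),
    ι (Function.update x i (c • z)) = c • ι (Function.update x i z)
  balanced : ∀ (x : Fin r → X) (i j : Fin r) (a : A), (j : ℕ) = (i : ℕ) + 1 →
    ι (Function.update x i (M.rsmul (x i) a)) = ι (Function.update x j (M.lsmul a (x j)))
  rsmul_eq : ∀ (x : Fin r → X) (i : Fin r) (a : A), (i : ℕ) + 1 = r →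
    Mr.rsmul (ι x) a = ι (Function.update x i (M.rsmul (x i) a))
  lsmul_eq : ∀ (x : Fin r → X) (i : Fin r) (a : A), (i : ℕ) = 0 →
    Mr.lsmul a (ι x) = ι (Function.update x i (M.lsmul a (x i)))

/-- Data exhibiting `(A', X')` as the quotient right Hilbert module of `X` over `A`
by a closed ideal `J` (so `A' = A/J` and `X' = X/X_J`). -/
structure QuotientRightModule {A : Type*} [CStarAlgebra A] {X : Type*}
    [NormedAddCommGroup X] [NormedSpace ℂ X] (M : HilbertBimodule A X)
    (J : Submodule ℂ A) {A' : Type*} [CStarAlgebra A'] (q : A →⋆ₐ[ℂ] A')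
    {X' : Type*} [NormedAddCommGroup X'] [NormedSpace ℂ X']
    (M' : RightHilbertModule A' X') (qX : X → X') : Prop where
  q_surj : Function.Surjective q
  q_ker : ∀ a : A, q a = 0 ↔ a ∈ J
  qX_add : ∀ x y : X, qX (x + y) = qX x + qX y
  qX_smul : ∀ (c : ℂ) (x : X), qX (c • x) = c • qX x
  qX_surj : Function.Surjective qX
  qX_ker : ∀ x : X, qX x = 0 ↔ M.inner x x ∈ J
  inner_compat : ∀ x y : X, M'.inner (qX x) (qX y) = q (M.inner x y)
  rsmul_compat : ∀ (x : X) (a : A), qX (M.rsmul x a) = M'.rsmul (qX x) (q a)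

/-- A Hilbert bimodule of finite type in the sense of Kajiwara–Watatani: it also
carries a left `A`-valued inner product admitting a finite left basis, compatible with
the right structure. -/
structure HilbertBimodule.FiniteType {A : Type*} [CStarAlgebra A] {X : Type*}
    [NormedAddCommGroup X] [NormedSpace ℂ X] (M : HilbertBimodule A X) where
  linner : X → X → A
  m : ℕ
  lbasis : Fin m → X
  linner_add_left : ∀ x y z : X, linner (x + y) z = linner x z + linner y z
  linner_smulC_left : ∀ (c : ℂ) (x y : X), linner (c • x) y = c • linner x y
  linner_lsmul_left : ∀ (a : A) (x y : X), linner (M.lsmul a x) y = a * linner x y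
  star_linner : ∀ x y : X, star (linner x y) = linner y x
  linner_self_pos : ∀ x : X, ∃ a : A, linner x x = star a * a
  linner_self_eq_zero : ∀ {x : X}, linner x x = 0 → x = 0
  linner_rsmul : ∀ (x : X) (a : A) (y : X),
    linner (M.rsmul x a) y = linner x (M.rsmul y (star a))
  lbasis_spec : ∀ x : X, (∑ i, M.lsmul (linner x (lbasis i)) (lbasis i)) = x

/-- `E` is a conditional expectation from the subset `dom` of a C*-algebra onto `C`. -/
structure IsCondExpOn {O : Type*} [CStarAlgebra O] (E : O → O) (dom C : Set O) : Prop where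
  mem : ∀ T ∈ dom, E T ∈ C
  fixes : ∀ T ∈ C, E T = T
  map_add : ∀ T ∈ dom, ∀ T' ∈ dom, E (T + T') = E T + E T'
  map_smul : ∀ (c : ℂ), ∀ T ∈ dom, E (c • T) = c • E T
  map_star : ∀ T ∈ dom, E (star T) = star (E T)
  pos : ∀ T ∈ dom, (∃ y : O, T = star y * y) → ∃ y : O, E T = star y * y
  bimod : ∀ c ∈ C, ∀ c' ∈ C, ∀ T ∈ dom, E (c * T * c') = c * E T * c'
  contractive : ∀ T ∈ dom, ‖E T‖ ≤ ‖T‖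

/-- A map between complex *-algebras is completely positive if all its matrix
amplifications map positive elements to positive elements. -/
def IsCompletelyPositive {B C : Type*} [Ring B] [StarRing B] [Ring C] [StarRing C]
    (f : B → C) : Prop :=
  ∀ (m : ℕ) (bM : Matrix (Fin m) (Fin m) B),
    (∃ c : Matrix (Fin m) (Fin m) B, bM = star c * c) →
    ∃ c : Matrix (Fin m) (Fin m) C, bM.map f = star c * c

/-- Nuclearity of a C*-algebra: the identity map can be approximated in the point-norm
topology by completely positive contractions factoring through matrix algebras. -/
def IsNuclear (B : Type*) [CStarAlgebra B] : Prop :=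
  ∀ (s : Finset B) (ε : ℝ), 0 < ε →
    ∃ (m : ℕ) (φ : B →ₗ[ℂ] (EuclideanSpace ℂ (Fin m) →L[ℂ] EuclideanSpace ℂ (Fin m)))
      (ψ : (EuclideanSpace ℂ (Fin m) →L[ℂ] EuclideanSpace ℂ (Fin m)) →ₗ[ℂ] B),
      IsCompletelyPositive (⇑φ) ∧ IsCompletelyPositive (⇑ψ) ∧
      (∀ b, ‖φ b‖ ≤ ‖b‖) ∧ (∀ T, ‖ψ T‖ ≤ ‖T‖) ∧
      ∀ b ∈ s, ‖ψ (φ b) - b‖ < ε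

section Multiplet

variable {A : Type*} [CStarAlgebra A] {X : Type*}
  [NormedAddCommGroup X] [NormedSpace ℂ X]

theorem RightHilbertModule.inner_add_left (M : RightHilbertModule A X) (x y z : X) :
    M.inner (x + y) z = M.inner x z + M.inner y z := by
  rw [← M.star_inner, M.inner_add_right, star_add, M.star_inner, M.star_inner]

theorem RightHilbertModule.inner_smulC_left (M : RightHilbertModule A X) (c : ℂ) (x y : X) :
    M.inner (c • x) y = star c • M.inner x y := by
  rw [← M.star_inner, M.inner_smulC_right, star_smul, M.star_inner]

theorem RightHilbertModule.inner_rsmul_left (M : RightHilbertModule A X) (x y : X) (a : A) :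
    M.inner (M.rsmul x a) y = star a * M.inner x y := by
  rw [← M.star_inner, M.inner_rsmul_right, star_mul, M.star_inner]

-- Mathlib leaves the order on a C*-algebra to be supplied; the spectral order is used here.
attribute [local instance] CStarAlgebra.spectralOrder CStarAlgebra.spectralOrderedRing

theorem RightHilbertModule.inner_self_nonneg (M : RightHilbertModule A X) (x : X) :
    0 ≤ M.inner x x := by
  obtain ⟨a, ha⟩ := M.inner_self_pos x
  rw [ha]
  exact star_mul_self_nonneg a

/-- Polarisation inequality `2 Re (x|y) ≤ (x|x) + (y|y)`. -/
theorem RightHilbertModule.inner_add_star_le (M : RightHilbertModule A X) (x y : X) :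
    M.inner x y + star (M.inner x y) ≤ M.inner x x + M.inner y y := by
  have h := M.inner_self_nonneg (x + (-1 : ℂ) • y)
  simp only [M.inner_add_right, M.inner_add_left, M.inner_smulC_right, M.inner_smulC_left]
    at h
  simp only [star_neg, star_one, neg_smul, one_smul, neg_neg] at h
  rw [M.star_inner, ← sub_nonneg]
  convert h using 1
  abel

/-- The scalar `c` is carried along because the set of `a` for which the inequality with `c = 1`
holds is not visibly closed under complex multiples. -/
theorem RightHilbertModule.exists_sum_inner_self_ge (M : RightHilbertModule A X) {a : A}
    (ha : a ∈ Submodule.span ℂ {a : A | ∃ x y : X, a = M.inner x y}) (c : ℂ) :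
    ∃ (m : ℕ) (z : Fin m → X), c • a + star (c • a) ≤ ∑ i, M.inner (z i) (z i) := by
  induction ha using Submodule.span_induction generalizing c with
  | mem a h =>
    obtain ⟨x, y, rfl⟩ := h
    refine ⟨2, ![x, c • y], ?_⟩
    rw [← M.inner_smulC_right]
    simpa [Fin.sum_univ_two] using M.inner_add_star_le x (c • y)
  | zero => exact ⟨0, Fin.elim0, by simp⟩
  | add a b _ _ iha ihb =>
    obtain ⟨m, z, hz⟩ := iha c
    obtain ⟨k, w, hw⟩ := ihb c
    refine ⟨m + k, Fin.append z w, ?_⟩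
    simp only [Fin.sum_univ_add, Fin.append_left, Fin.append_right]
    refine le_trans (le_of_eq ?_) (add_le_add hz hw)
    rw [smul_add, star_add]
    abel
  | smul d a _ iha =>
    rw [smul_smul]
    exact iha (c * d)

theorem RightHilbertModule.exists_sum_inner_self_eq_one (M : RightHilbertModule A X)
    (hfull : M.IsFull) : ∃ (m : ℕ) (y : Fin m → X), ∑ i, M.inner (y i) (y i) = 1 := by
  have h1 : (1 : A) ∈
      (Submodule.span ℂ {a : A | ∃ x y : X, a = M.inner x y}).topologicalClosure := by
    rw [hfull]; trivial
  obtain ⟨a, ha, hdist⟩ := Metric.mem_closure_iff.1 h1 (1 / 4) (by norm_num)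
  obtain ⟨m, z, hz⟩ := M.exists_sum_inner_self_ge ha 1
  rw [one_smul] at hz
  set c := ∑ i, M.inner (z i) (z i) with hc
  -- `d = 2 Re a - 2` has norm at most `1/2`, which yields `2 Re a ≥ 1`.
  set d : A := (a - 1) + star (a - 1) with hd
  have hdn : ‖d‖ ≤ 1 / 2 := by
    rw [dist_comm, dist_eq_norm] at hdist
    calc ‖d‖ ≤ ‖a - 1‖ + ‖star (a - 1)‖ := norm_add_le _ _
      _ ≤ 1 / 2 := by rw [norm_star]; linarith
  have hle : algebraMap ℝ A 1 ≤ c := by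
    refine le_trans ?_ hz
    have h2 := (IsSelfAdjoint.add_star_self (a - 1)).neg_algebraMap_norm_le_self
    have h3 : -algebraMap ℝ A 1 ≤ d := by
      refine le_trans (neg_le_neg (algebraMap_mono A ?_)) h2
      exact hdn.trans (by norm_num)
    have h4 := add_le_add_right h3 (2 : A)
    rw [map_one] at h4 ⊢
    convert h4 using 1
    · norm_num
    · rw [hd, star_sub, star_one, ← one_add_one_eq_two]; abel
  have hpos : IsStrictlyPositive c := by
    rw [map_one] at hle
    exact IsStrictlyPositive.of_le isStrictlyPositive_one hle
  set r : A := c ^ (-(1 / 2) : ℝ) with hr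
  have hrs : star r = r := (IsSelfAdjoint.of_nonneg CFC.rpow_nonneg).star_eq
  refine ⟨m, fun i => M.rsmul (z i) r, ?_⟩
  simp only [M.inner_rsmul_left, M.inner_rsmul_right]
  rw [← Finset.mul_sum, ← Finset.sum_mul, ← hc, hrs, ← mul_assoc]
  exact CFC.conjugate_rpow_neg_one_half c

end Multiplet

section Commutation

variable {A : Type*} [CStarAlgebra A] {X : Type*}
  [NormedAddCommGroup X] [NormedSpace ℂ X] {M : HilbertBimodule A X}

theorem HilbertBimodule.Represents.map_sum {D : Type*} [CStarAlgebra D] {V : X → D}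
    {ρ : A →⋆ₐ[ℂ] D} (h : M.Represents V ρ) {ι : Type*} (s : Finset ι) (f : ι → X) :
    V (∑ i ∈ s, f i) = ∑ i ∈ s, V (f i) :=
  _root_.map_sum (AddMonoidHom.mk' V h.map_add) f s

/-- `σ(B) S_y = S_y B` for `B` in the relative commutant of `A`. -/
theorem PimsnerAlgebra.gsh_mul_S {n : ℕ} {u : Fin n → X} (hu : M.IsBasis u)
    {O : Type*} [CStarAlgebra O] (P : PimsnerAlgebra M u O) {B : O} (hB : B ∈ P.commA) (y : X) :
    P.gsh B * P.S y = P.S y * B := by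
  conv_rhs => rw [← hu y]
  rw [P.rep.map_sum, PimsnerAlgebra.gsh, Finset.sum_mul, Finset.sum_mul]
  refine Finset.sum_congr rfl fun i _ => ?_
  rw [P.rep.map_rsmul, mul_assoc, P.rep.map_inner, mul_assoc, mul_assoc, hB]

end Commutation

/-- Proposition 5.3: a full Hilbert bimodule over a unital
C*-algebra admits a multiplet `y₁, …, y_m` with `Σᵢ (yᵢ|yᵢ)_A = 1`, and the completely
positive map `Φ(T) = Σᵢ S_{yᵢ}* T S_{yᵢ}` satisfies `Φ(T σ(B)) = Φ(T) B` for
`B ∈ A' ∩ O_X`; in particular `Φ` is a left inverse of `σ` on `A' ∩ O_X`. -/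
theorem statement15 {A : Type*} [CStarAlgebra A] {X : Type*}
    [NormedAddCommGroup X] [NormedSpace ℂ X] {M : HilbertBimodule A X}
    (hfull : M.IsFull) {n : ℕ} {u : Fin n → X} (hu : M.IsBasis u)
    {O : Type*} [CStarAlgebra O] (P : PimsnerAlgebra M u O) :
    (∃ (m : ℕ) (y : Fin m → X), (∑ i, M.inner (y i) (y i)) = 1) ∧
    (∀ (m : ℕ) (y : Fin m → X), (∑ i, M.inner (y i) (y i)) = 1 →
      (∀ T : O, ∀ B ∈ P.commA,
        (∑ i, star (P.S (y i)) * (T * P.gsh B) * P.S (y i)) =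
          (∑ i, star (P.S (y i)) * T * P.S (y i)) * B) ∧
      (∀ B ∈ P.commA, (∑ i, star (P.S (y i)) * P.gsh B * P.S (y i)) = B)) := by
  refine ⟨M.toRightHilbertModule.exists_sum_inner_self_eq_one hfull, fun m y hy => ?_⟩
  have key : ∀ T : O, ∀ B ∈ P.commA,
      (∑ i, star (P.S (y i)) * (T * P.gsh B) * P.S (y i)) =
        (∑ i, star (P.S (y i)) * T * P.S (y i)) * B := by
    intro T B hB
    rw [Finset.sum_mul]
    refine Finset.sum_congr rfl fun i _ => ?_
    simp only [mul_assoc, P.gsh_mul_S hu hB]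
  refine ⟨key, fun B hB => ?_⟩
  have h := key 1 B hB
  simp only [one_mul, mul_one, P.rep.map_inner] at h
  rwa [← map_sum, hy, map_one, one_mul] at h
end
end

section
/- Let A be a unital C*-algebra and X a full Hilbert bimodule over A. Then the center of the C*-algebra L_A(X_A) of adjointable right A-module operators on X equals the set of right multiplication operators r(a) : x ↦ xa with a ∈ Z(A), the center of A. -/
/-!
The rank one operators `θ_{x,y} : z ↦ x (y|z)` are adjointable. If `T` is central, comparing
`T θ_{x,y} z` with `θ_{x,y} T z` gives `(T x)(y|z) = x (y|T z)`, so by linearity every `b` in the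
span of the inner products has a `c` with `(T x) b = x c` for all `x`. Since `A` is unital and the
span is dense, it contains an invertible `b`, and then `T x = x (c b⁻¹)`. This argument needs
no completeness of `X`. As `T` is right `A`-linear, `x (d a) = x (a d)` for `a = c b⁻¹` and every
`d`; pairing with `y` and using the same invertible `b` gives `d a = a d`.

Conversely, adjointable operators are right `A`-linear, so they commute with every right
multiplication, and for central `a` the adjoint of right multiplication by `a` is right
multiplication by the (again central) element `star a`.
-/

noncomputable section

universe uO

open scoped BigOperators

namespace RightHilbertModule

variable {A : Type*} [CStarAlgebra A] {X : Type*}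
  [NormedAddCommGroup X] [NormedSpace ℂ X]

lemma inner_rsmul_left_s16 (M : RightHilbertModule A X) (x y : X) (a : A) :
    M.inner (M.rsmul x a) y = star a * M.inner x y := by
  rw [← M.star_inner, M.inner_rsmul_right, star_mul, M.star_inner]

lemma inner_sub_right (M : RightHilbertModule A X) (x y z : X) :
    M.inner x (y - z) = M.inner x y - M.inner x z := by
  rw [eq_sub_iff_add_eq, ← M.inner_add_right, sub_add_cancel]

lemma rsmul_zero (M : RightHilbertModule A X) (x : X) : M.rsmul x 0 = 0 := by
  simpa using M.rsmul_smulC' 0 x 0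

/-- The inner product separates points. -/
lemma ext_inner (M : RightHilbertModule A X) {u v : X}
    (h : ∀ y, M.inner y u = M.inner y v) : u = v := by
  rw [← sub_eq_zero]
  apply M.inner_self_eq_zero
  rw [M.inner_sub_right, h, sub_self]

/-- Adjointable operators are automatically right `A`-linear. -/
lemma adjointable_rsmul {M : RightHilbertModule A X} (k : Adjointable M M) (x : X) (a : A) :
    k.toFun (M.rsmul x a) = M.rsmul (k.toFun x) a := by
  have adj (u v : X) : M.inner u (k.toFun v) = M.inner (k.adjFun u) v :=
    (k.flip.inner_adj u v).symm
  apply M.ext_inner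
  intro y
  rw [adj, M.inner_rsmul_right, M.inner_rsmul_right, adj]

/-- The bounded operator `z ↦ x (y|z)`. -/
def rankOneCLM (M : RightHilbertModule A X) (x y : X) : X →L[ℂ] X :=
  LinearMap.mkContinuous
    { toFun := fun z => M.rsmul x (M.inner y z)
      map_add' := fun z w => by rw [M.inner_add_right, M.rsmul_addA]
      map_smul' := fun c z => by
        rw [M.inner_smulC_right, M.rsmul_smulC', RingHom.id_apply] }
    (‖x‖ * ‖y‖) fun z => by
      refine (M.norm_rsmul_le x (M.inner y z)).trans ?_
      rw [mul_assoc]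
      exact mul_le_mul_of_nonneg_left (M.norm_inner_le y z) (norm_nonneg x)

/-- The rank one operator `θ_{x,y} : z ↦ x (y|z)`, with adjoint `θ_{y,x}`. -/
def rankOne (M : RightHilbertModule A X) (x y : X) : Adjointable M M where
  toFun := M.rankOneCLM x y
  adjFun := M.rankOneCLM y x
  inner_adj := fun z w => by
    change M.inner (M.rsmul x (M.inner y z)) w = M.inner z (M.rsmul y (M.inner x w))
    rw [M.inner_rsmul_left_s16, M.inner_rsmul_right, M.star_inner]

/-- Right multiplication by `a`, as a bounded operator. -/
def rsmulCLM (M : RightHilbertModule A X) (a : A) : X →L[ℂ] X :=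
  LinearMap.mkContinuous
    { toFun := fun x => M.rsmul x a
      map_add' := fun x y => M.rsmul_add x y a
      map_smul' := fun c x => M.rsmul_smulC c x a }
    ‖a‖ fun x => (M.norm_rsmul_le x a).trans_eq (mul_comm _ _)

/-- Right multiplication by a central element `a`, with adjoint right multiplication by
`star a`. -/
def rsmulAdjointable (M : RightHilbertModule A X) (a : A) (ha : ∀ b : A, a * b = b * a) :
    Adjointable M M where
  toFun := M.rsmulCLM a
  adjFun := M.rsmulCLM (star a)
  inner_adj := fun x y => by
    change M.inner (M.rsmul x a) y = M.inner x (M.rsmul y (star a))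
    rw [M.inner_rsmul_left_s16, M.inner_rsmul_right]
    simpa using (congrArg star (ha (star (M.inner x y)))).symm

/-- In a full module over a unital algebra, some finite combination of inner products is
invertible, because invertible elements fill the unit ball around `1`. -/
lemma exists_isUnit_mem_span (M : RightHilbertModule A X) (hfull : M.IsFull) :
    ∃ b ∈ Submodule.span ℂ {a : A | ∃ x y : X, a = M.inner x y}, IsUnit b := by
  have h1 : (1 : A) ∈
      closure (Submodule.span ℂ {a : A | ∃ x y : X, a = M.inner x y} : Set A) := by
    rw [← Submodule.topologicalClosure_coe, hfull]
    trivial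
  obtain ⟨b, hb, hd⟩ := Metric.mem_closure_iff.mp h1 1 one_pos
  rw [dist_eq_norm] at hd
  refine ⟨b, hb, ?_⟩
  simpa using isUnit_one_sub_of_norm_lt_one hd

/-- Right multiplication is a faithful action on a full module. -/
lemma eq_of_rsmul_eq (M : RightHilbertModule A X) (hfull : M.IsFull) {c d : A}
    (h : ∀ x, M.rsmul x c = M.rsmul x d) : c = d := by
  obtain ⟨b, hb, hu⟩ := M.exists_isUnit_mem_span hfull
  suffices b * c = b * d from hu.mul_left_cancel this
  clear hu
  induction hb using Submodule.span_induction with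
  | mem b hb =>
    obtain ⟨x, y, rfl⟩ := hb
    rw [← M.inner_rsmul_right, ← M.inner_rsmul_right, h]
  | zero => simp
  | add b b' _ _ h h' => rw [add_mul, add_mul, h, h']
  | smul z b _ h => rw [smul_mul_assoc, smul_mul_assoc, h]

/-- A map `T` with `(T x)(y|z) = x (y|T z)` is a right multiplication. For a right `A`-linear `T`
the hypothesis says that `T` commutes with all rank one operators. -/
lemma exists_eq_rsmul (M : RightHilbertModule A X) (hfull : M.IsFull) (T : X → X)
    (hT : ∀ x y z, M.rsmul (T x) (M.inner y z) = M.rsmul x (M.inner y (T z))) :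
    ∃ a : A, ∀ x, T x = M.rsmul x a := by
  obtain ⟨b, hb, hu⟩ := M.exists_isUnit_mem_span hfull
  have key : ∃ c : A, ∀ x, M.rsmul (T x) b = M.rsmul x c := by
    clear hu
    induction hb using Submodule.span_induction with
    | mem b hb =>
      obtain ⟨y, z, rfl⟩ := hb
      exact ⟨M.inner y (T z), fun x => hT x y z⟩
    | zero => exact ⟨0, fun x => by rw [M.rsmul_zero, M.rsmul_zero]⟩
    | add b b' _ _ h h' =>
      obtain ⟨c, hc⟩ := h
      obtain ⟨c', hc'⟩ := h'
      exact ⟨c + c', fun x => by rw [M.rsmul_addA, M.rsmul_addA, hc, hc']⟩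
    | smul s b _ h =>
      obtain ⟨c, hc⟩ := h
      exact ⟨s • c, fun x => by rw [M.rsmul_smulC', M.rsmul_smulC', hc]⟩
  obtain ⟨c, hc⟩ := key
  obtain ⟨u, rfl⟩ := hu
  refine ⟨c * ↑u⁻¹, fun x => ?_⟩
  rw [← M.rsmul_mul, ← hc, M.rsmul_mul, Units.mul_inv, M.rsmul_one]

end RightHilbertModule

/-- Lemma 5.4: for a full Hilbert bimodule `X` over a unital
C*-algebra `A`, the center of `L_A(X_A)` consists exactly of the right multiplications
`r(a) : x ↦ xa` by central elements `a ∈ Z(A)`. -/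
theorem statement16 {A : Type*} [CStarAlgebra A] {X : Type*}
    [NormedAddCommGroup X] [NormedSpace ℂ X] (M : HilbertBimodule A X)
    (hfull : M.IsFull) :
    (∀ k : Adjointable M.toRightHilbertModule M.toRightHilbertModule,
      (∀ k' : Adjointable M.toRightHilbertModule M.toRightHilbertModule,
        ∀ x : X, k.toFun (k'.toFun x) = k'.toFun (k.toFun x)) ↔
      ∃ a : A, (∀ b : A, a * b = b * a) ∧ ∀ x : X, k.toFun x = M.rsmul x a) ∧
    (∀ a : A, (∀ b : A, a * b = b * a) →
      ∃ k : Adjointable M.toRightHilbertModule M.toRightHilbertModule,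
        ∀ x : X, k.toFun x = M.rsmul x a) := by
  have hfull' : M.toRightHilbertModule.IsFull := hfull
  refine ⟨fun k => ⟨fun hk => ?_, ?_⟩, fun a ha =>
    ⟨M.toRightHilbertModule.rsmulAdjointable a ha, fun x => rfl⟩⟩
  · have hT (x y z : X) :
        M.rsmul (k.toFun x) (M.inner y z) = M.rsmul x (M.inner y (k.toFun z)) := by
      rw [← RightHilbertModule.adjointable_rsmul k]
      exact hk (M.toRightHilbertModule.rankOne x y) z
    obtain ⟨a, ha⟩ := M.toRightHilbertModule.exists_eq_rsmul hfull' k.toFun hT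
    refine ⟨a, fun d => M.toRightHilbertModule.eq_of_rsmul_eq hfull' fun x => ?_, ha⟩
    rw [← M.rsmul_mul, ← M.rsmul_mul, ← ha, ← ha, RightHilbertModule.adjointable_rsmul k]
  · rintro ⟨a, -, ha⟩ k' x
    rw [ha, ha, RightHilbertModule.adjointable_rsmul k']
end
end

section
/- Let A = A_1 ⊕ … ⊕ A_d be a direct sum of d unital simple C*-algebras with minimal central projections p_1,…,p_d, and let X be a full finite projective Hilbert bimodule over A. Define the matrix Â ∈ M_d({0,1}) by Â(i,j) = 1 if φ(p_i) r(p_j) ≠ 0 and Â(i,j) = 0 otherwise, where r(a) : x ↦ xa is right multiplication on X. Then A is X-simple if and only if Â is irreducible, i.e. for every pair (i,j) there exists n ∈ ℕ with Â^n(i,j) > 0. -/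
/-!
Read `Â` as a directed graph on the summands, with an edge `i → j` when `p i X p j ≠ 0`.
By simplicity of the summands a closed ideal is determined by the set of `i` with `p i ∈ J`,
and the ideal is `X`-invariant exactly when this set is closed under following edges. Hence
`A` is `X`-simple iff no proper nonempty set of vertices is closed under edges.

* If `J` is invariant, `p i ∈ J` and `y ∈ p i X p j` is nonzero, then `⟨y, y⟩` is a nonzero
  element of `J` in the `j`-th summand, so `p j ∈ J` (`proj_mem_of_edge`). Irreducibility then
  spreads a single `p i ∈ J` to all of them.
* Conversely, an edge-closed set `S` of vertices gives the invariant closed ideal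
  `⨁_{i ∈ S} p i A` (`cutIdeal_xInvariant`). This is applied to the set of vertices reachable
  from `i` by a path of positive length; it is nonempty since `A` acts faithfully on the left.
-/

noncomputable section

universe uO

open scoped BigOperators

namespace HilbertBimodule

variable {A : Type*} [CStarAlgebra A] {X : Type*}
  [NormedAddCommGroup X] [NormedSpace ℂ X] (M : HilbertBimodule A X)

lemma inner_zero_right (x : X) : M.inner x 0 = 0 := by
  simpa using M.inner_smulC_right 0 x 0

lemma lsmul_zero_right (a : A) : M.lsmul a 0 = 0 := by
  simpa using M.lsmul_smulC 0 a 0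

lemma lsmul_sum {d : ℕ} (p : Fin d → A) (z : X) :
    M.lsmul (∑ i, p i) z = ∑ i, M.lsmul (p i) z :=
  map_sum (AddMonoidHom.mk' (fun a => M.lsmul a z) (fun a b => M.lsmul_addA a b z)) p _

lemma rsmul_sum {d : ℕ} (p : Fin d → A) (z : X) :
    M.rsmul z (∑ i, p i) = ∑ i, M.rsmul z (p i) :=
  map_sum (AddMonoidHom.mk' (fun a => M.rsmul z a) (fun a b => M.rsmul_addA z a b)) p _

/-- Membership in an invariant ideal `J` propagates along an edge from the projection `q` to the
central projection `r`: for nonzero `y ∈ q X r`, the element `⟨y, y⟩ = r ⟨y, y⟩` of `J` is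
nonzero, which forces `r ∈ J` by simplicity of `r A`. -/
lemma proj_mem_of_edge {J : Submodule ℂ A} (hinv : M.XInvariant J) {q r : A}
    (hq : q * q = q) (hr : r * r = r) (hcentral : ∀ a, r * a = a * r)
    (hsimple : r ∈ J ∨ ∀ a ∈ J, r * a = 0) (hqJ : q ∈ J) {x : X}
    (hx : M.lsmul q (M.rsmul x r) ≠ 0) : r ∈ J := by
  set y := M.lsmul q (M.rsmul x r) with hy
  have hqy : M.lsmul q y = y := by rw [hy, ← M.lsmul_mul, hq]
  have hyr : M.rsmul y r = y := by rw [hy, M.lsmul_rsmul, M.rsmul_mul, hr]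
  have hyJ : M.inner y y ∈ J := by simpa only [hqy] using hinv y y q hqJ
  refine hsimple.resolve_right fun h => hx (M.inner_self_eq_zero ?_)
  have h0 := h _ hyJ
  rwa [hcentral, ← M.inner_rsmul_right, hyr] at h0

/-- The elements of `A` whose components outside `S` vanish, i.e. `⨁_{i ∈ S} p i A` when the
`p i` are central orthogonal projections with sum `1`. -/
def cutIdeal {d : ℕ} (p : Fin d → A) (S : Set (Fin d)) : Submodule ℂ A where
  carrier := {a | ∀ j, j ∉ S → p j * a = 0}
  add_mem' := fun ha hb j hj => by rw [mul_add, ha j hj, hb j hj, add_zero]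
  zero_mem' := fun j _ => mul_zero _
  smul_mem' := fun c a ha j hj => by rw [mul_smul_comm, ha j hj, smul_zero]

lemma cutIdeal_isClosedIdeal {d : ℕ} (p : Fin d → A)
    (hcentral : ∀ (i) (a : A), p i * a = a * p i) (S : Set (Fin d)) :
    IsClosedIdeal (cutIdeal p S) := by
  refine ⟨?_, fun b a ha => ⟨fun j hj => ?_, fun j hj => ?_⟩⟩
  · have h : (cutIdeal p S : Set A) = ⋂ (j) (_ : j ∉ S), {a | p j * a = 0} := by
      ext a
      simp [cutIdeal]
    rw [h]
    exact isClosed_iInter fun j => isClosed_iInter fun _ =>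
      isClosed_eq (continuous_const.mul continuous_id) continuous_const
  · rw [← mul_assoc, hcentral, mul_assoc, ha j hj, mul_zero]
  · rw [← mul_assoc, ha j hj, zero_mul]

/-- If no edge leaves `S`, then the ideal supported on `S` is invariant. -/
lemma cutIdeal_xInvariant {d : ℕ} (p : Fin d → A)
    (hcentral : ∀ (i) (a : A), p i * a = a * p i) (hsum : (∑ i, p i) = 1) (S : Set (Fin d))
    (hS : ∀ k ∈ S, ∀ j, j ∉ S → ∀ x : X, M.lsmul (p k) (M.rsmul x (p j)) = 0) :
    M.XInvariant (cutIdeal p S) := by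
  intro x y a ha j hj
  rw [hcentral, ← M.inner_rsmul_right, M.lsmul_rsmul]
  -- split `a` as `∑ k, a * p k`: the terms with `k ∈ S` kill `y p j`, the others vanish
  have h : M.lsmul a (M.rsmul y (p j)) = 0 := by
    rw [← M.lsmul_one (M.rsmul y (p j)), ← M.lsmul_mul, ← hsum, Finset.mul_sum, M.lsmul_sum]
    refine Finset.sum_eq_zero fun k _ => ?_
    by_cases hk : k ∈ S
    · rw [M.lsmul_mul, hS k hk j hj, M.lsmul_zero_right]
    · rw [← hcentral, ha k hk]
      simpa using M.lsmul_addA 0 0 (M.rsmul y (p j))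
  rw [h, M.inner_zero_right]

/-- Every vertex has an outgoing edge, as the left action is faithful. -/
lemma exists_edge (hfaith : M.LeftFaithful) {d : ℕ} (p : Fin d → A) (hsum : (∑ i, p i) = 1)
    {q : A} (hq : q ≠ 0) : ∃ j, ∃ x : X, M.lsmul q (M.rsmul x (p j)) ≠ 0 := by
  by_contra! h
  refine hq (hfaith q fun x => ?_)
  rw [← M.rsmul_one (M.lsmul q x), ← hsum, M.rsmul_sum]
  exact Finset.sum_eq_zero fun j _ => by rw [M.lsmul_rsmul, h j x]

end HilbertBimodule

/-- Proposition 5.5: if `A = A₁ ⊕ … ⊕ A_d` is a direct sum of unital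
simple C*-algebras with minimal central projections `p₁, …, p_d` and `X` is a full
finite projective Hilbert bimodule over `A` with associated 0–1 matrix
`Â(i,j) = 1 ⟺ φ(pᵢ) r(pⱼ) ≠ 0`, then `A` is `X`-simple iff `Â` is irreducible. -/
theorem statement17 {A : Type*} [CStarAlgebra A] {X : Type*}
    [NormedAddCommGroup X] [NormedSpace ℂ X] {M : HilbertBimodule A X}
    (hfull : M.IsFull) {n : ℕ} {u : Fin n → X} (hu : M.IsBasis u)
    (hfaith : M.LeftFaithful)
    {d : ℕ} (p : Fin d → A)
    (hp_star : ∀ i, star (p i) = p i)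
    (hp_idem : ∀ i, p i * p i = p i)
    (hp_orth : ∀ i j, i ≠ j → p i * p j = 0)
    (hp_sum : (∑ i, p i) = 1)
    (hp_central : ∀ (i) (a : A), p i * a = a * p i)
    (hp_ne : ∀ i, p i ≠ 0)
    -- each direct summand `Aᵢ = pᵢA` is simple
    (hp_simple : ∀ J : Submodule ℂ A, IsClosedIdeal J →
      ∀ i, p i ∈ J ∨ ∀ a ∈ J, p i * a = 0)
    -- the associated matrix `Â`
    (Ahat : Matrix (Fin d) (Fin d) ℕ)
    (hA01 : ∀ i j, Ahat i j = 0 ∨ Ahat i j = 1)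
    (hA : ∀ i j, Ahat i j = 1 ↔ ∃ x : X, M.lsmul (p i) (M.rsmul x (p j)) ≠ 0) :
    M.XSimple ↔ ∀ i j, ∃ m : ℕ, 0 < m ∧ 0 < (Ahat ^ m) i j := by
  have hpos : ∀ i j, 0 < Ahat i j ↔ ∃ x : X, M.lsmul (p i) (M.rsmul x (p j)) ≠ 0 := by
    intro i j
    rw [← hA]
    have := hA01 i j
    lia
  constructor
  · intro hsimple i
    let S : Set (Fin d) := {j | ∃ m : ℕ, 0 < m ∧ 0 < (Ahat ^ m) i j}
    have hS : ∀ k ∈ S, ∀ j, j ∉ S → ∀ x : X, M.lsmul (p k) (M.rsmul x (p j)) = 0 := by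
      rintro k ⟨m, -, hm⟩ j hj x
      by_contra hx
      refine hj ⟨m + 1, m.succ_pos, ?_⟩
      rw [pow_succ, Matrix.mul_apply]
      exact Finset.sum_pos' (fun _ _ => Nat.zero_le _)
        ⟨k, Finset.mem_univ k, Nat.mul_pos hm ((hpos k j).2 ⟨x, hx⟩)⟩
    rcases hsimple _ (HilbertBimodule.cutIdeal_isClosedIdeal p hp_central S)
      (M.cutIdeal_xInvariant p hp_central hp_sum S hS) with h | h
    · obtain ⟨j, hj⟩ := M.exists_edge hfaith p hp_sum (hp_ne i)
      have hjS : j ∈ S := ⟨1, one_pos, by rw [pow_one]; exact (hpos i j).2 hj⟩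
      have hmem : p j ∈ HilbertBimodule.cutIdeal p S := fun k hk =>
        hp_orth k j fun hkj => hk (hkj ▸ hjS)
      rw [h] at hmem
      exact absurd hmem (hp_ne j)
    · intro j
      have h1 : (1 : A) ∈ HilbertBimodule.cutIdeal p S := h ▸ Submodule.mem_top
      by_contra hj
      exact hp_ne j (by simpa using h1 j hj)
  · intro hirr J hJ hinv
    refine or_iff_not_imp_left.2 fun hbot => ?_
    obtain ⟨a, haJ, ha⟩ := J.exists_mem_ne_zero_of_ne_bot hbot
    obtain ⟨i, hi⟩ : ∃ i, p i ∈ J := by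
      by_contra! h
      refine ha ?_
      rw [← one_mul a, ← hp_sum, Finset.sum_mul]
      exact Finset.sum_eq_zero fun i _ => (hp_simple J hJ i).resolve_left (h i) a haJ
    have hreach : ∀ (m : ℕ) (j), 0 < (Ahat ^ m) i j → p j ∈ J := by
      intro m
      induction m with
      | zero =>
        intro j hj
        obtain rfl : i = j := by
          by_contra hne
          simp [Matrix.one_apply_ne hne] at hj
        exact hi
      | succ m ih =>
        intro j hj
        rw [pow_succ, Matrix.mul_apply] at hj
        obtain ⟨k, -, hk⟩ := Finset.exists_ne_zero_of_sum_ne_zero hj.ne'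
        obtain ⟨x, hx⟩ := (hpos k j).1 (Nat.pos_of_ne_zero (right_ne_zero_of_mul hk))
        exact M.proj_mem_of_edge hinv (hp_idem k) (hp_idem j) (hp_central j)
          (hp_simple J hJ j) (ih k (Nat.pos_of_ne_zero (left_ne_zero_of_mul hk))) hx
    have h1 : (1 : A) ∈ J := by
      rw [← hp_sum]
      refine J.sum_mem fun j _ => ?_
      obtain ⟨m, -, hm⟩ := hirr i j
      exact hreach m j hm
    refine eq_top_iff.2 fun b _ => ?_
    simpa using (hJ.2 b 1 h1).1
end
end
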